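/- Let κ, ω, T₁, T₂ be positive reals with T₂ > 1/(4κ), and set ζ := min{2T₁, 2κ − 1/(2T₂)}. Let z, e_f : [0,∞) → ℝⁿ be differentiable with e_f(0) = 0, let r : [0,∞) → ℝ be continuous, and let B : [0,∞) → ℝ^{n×n} be a continuous matrix-valued function. Suppose that for all t ≥ 0: (i) ė_f(t) = −(T₁ + T₂·r(t)²·‖B(t)‖²)·e_f(t) + r(t)·B(t)·z(t), and (ii) the function t ↦ (1/2)‖z(t)‖² is differentiable with derivative at most −κ‖z(t)‖² + ω. Then for all t ≥ 0, ‖e_f(t)‖ ≤ √((‖z(0)‖² − 2ω/ζ)·e^{−ζt} + 2ω/ζ). -/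

import Mathlib

/-- Frobenius norm of a real matrix. -/
noncomputable def frobNorm {n m : ℕ} (B : Matrix (Fin n) (Fin m) ℝ) : ℝ :=
  Real.sqrt (∑ i, ∑ j, (B i j) ^ 2)

/-- Matrix-vector product, with values in Euclidean space. -/
noncomputable def matVec {n m : ℕ} (B : Matrix (Fin n) (Fin m) ℝ)
    (v : EuclideanSpace ℝ (Fin m)) : EuclideanSpace ℝ (Fin n) :=
  WithLp.toLp 2 (fun i => ∑ j, B i j * v j)

/-!
In `d‖e‖²/dt = 2⟪e, ė⟫`, Young's inequality splits the coupling between `e` and `z` into a part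
absorbed by the gain term `T₂ r² b²` and a remainder `‖z‖² / (2 T₂)`. The remainder costs part of
the decay rate `2κ` of `‖z‖²`, so the energy `W = ‖e‖² + ‖z‖²` satisfies `Ẇ ≤ -ζ W + 2ω`, and
Grönwall's inequality bounds `W ≥ ‖e‖²`.
-/

open Set

open scoped RealInnerProductSpace

lemma norm_matVec_le {n m : ℕ} (B : Matrix (Fin n) (Fin m) ℝ) (v : EuclideanSpace ℝ (Fin m)) :
    ‖matVec B v‖ ≤ frobNorm B * ‖v‖ := by
  rw [EuclideanSpace.norm_eq, EuclideanSpace.norm_eq, frobNorm, ← Real.sqrt_mul (by positivity),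
    Finset.sum_mul]
  refine Real.sqrt_le_sqrt (Finset.sum_le_sum fun i _ => ?_)
  simpa only [Real.norm_eq_abs, sq_abs, matVec] using
    Finset.sum_mul_sq_le_sq_mul_sq Finset.univ (B i) v

lemma le_exp_of_deriv_right_le {f f' : ℝ → ℝ} {a ζ c : ℝ} (hζ : ζ ≠ 0)
    (hf : ContinuousOn f (Ici a)) (hf' : ∀ t ≥ a, HasDerivWithinAt f (f' t) (Ici t) t)
    (bound : ∀ t ≥ a, f' t ≤ -ζ * f t + c) {t : ℝ} (ht : a ≤ t) :
    f t ≤ (f a - c / ζ) * Real.exp (-ζ * (t - a)) + c / ζ := by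
  have hgronwall : f t ≤ gronwallBound (f a) (-ζ) c (t - a) :=
    le_gronwallBound_of_liminf_deriv_right_le (hf.mono Icc_subset_Ici_self)
      (fun s hs _ => (hf' s hs.1).liminf_right_slope_le) le_rfl (fun s hs => bound s hs.1)
      t (right_mem_Icc.2 ht)
  rw [gronwallBound_of_K_ne_0 (neg_ne_zero.2 hζ), div_neg] at hgronwall
  linarith

lemma two_mul_inner_damped_le {E : Type*} [SeminormedAddCommGroup E] [InnerProductSpace ℝ E]
    {T₂ b y : ℝ} (T₁ r : ℝ) (hT₂ : 0 < T₂) (x : E) {v : E} (hv : ‖v‖ ≤ b * y) :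
    2 * ⟪x, (-(T₁ + T₂ * r ^ 2 * b ^ 2)) • x + r • v⟫ ≤
      -(2 * T₁) * ‖x‖ ^ 2 + 1 / (2 * T₂) * y ^ 2 := by
  have hcoupling : ⟪x, r • v⟫ ≤ ‖x‖ * (|r| * (b * y)) :=
    calc ⟪x, r • v⟫ ≤ ‖x‖ * ‖r • v‖ := real_inner_le_norm x (r • v)
      _ = ‖x‖ * (|r| * ‖v‖) := by rw [norm_smul, Real.norm_eq_abs]
      _ ≤ ‖x‖ * (|r| * (b * y)) := by gcongr
  have hyoung : 2 * (|r| * b * ‖x‖) * y ≤ 2 * T₂ * (|r| * b * ‖x‖) ^ 2 + (2 * T₂)⁻¹ * y ^ 2 :=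
    two_mul_le_add_mul_sq (by positivity)
  rw [mul_pow, mul_pow, sq_abs] at hyoung
  rw [inner_add_right, real_inner_smul_right, real_inner_self_eq_norm_sq, one_div]
  linarith

lemma two_mul_sub_one_div_pos {κ T : ℝ} (hκ : 0 < κ) (hT : 1 / (4 * κ) < T) :
    0 < 2 * κ - 1 / (2 * T) := by
  have hT₀ : 0 < T := lt_trans (by positivity) hT
  rw [div_lt_iff₀ (by positivity)] at hT
  rw [sub_pos, div_lt_iff₀ (by positivity)]
  linarith

theorem stmt3_general {E F : Type*} [NormedAddCommGroup E] [InnerProductSpace ℝ E]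
    [SeminormedAddCommGroup F] {κ ω T₁ T₂ ζ : ℝ} (hT₂ : 0 < T₂) (hζ₀ : ζ ≠ 0)
    (hζT₁ : ζ ≤ 2 * T₁) (hζκ : ζ ≤ 2 * κ - 1 / (2 * T₂))
    {e v : ℝ → E} {z : ℝ → F} {r b V' : ℝ → ℝ}
    (he : ∀ t ≥ (0 : ℝ),
      HasDerivWithinAt e ((-(T₁ + T₂ * r t ^ 2 * b t ^ 2)) • e t + r t • v t) (Ici 0) t)
    (hv : ∀ t ≥ (0 : ℝ), ‖v t‖ ≤ b t * ‖z t‖)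
    (hz : ∀ t ≥ (0 : ℝ), HasDerivWithinAt (fun s => (1 / 2) * ‖z s‖ ^ 2) (V' t) (Ici 0) t)
    (hV' : ∀ t ≥ (0 : ℝ), V' t ≤ -κ * ‖z t‖ ^ 2 + ω) :
    ∀ t ≥ (0 : ℝ), ‖e t‖ ≤ Real.sqrt
      ((‖e 0‖ ^ 2 + ‖z 0‖ ^ 2 - 2 * ω / ζ) * Real.exp (-ζ * t) + 2 * ω / ζ) := by
  intro t ht
  let W : ℝ → ℝ := fun s => ‖e s‖ ^ 2 + ‖z s‖ ^ 2
  let W' : ℝ → ℝ := fun s => 2 * ⟪e s, (-(T₁ + T₂ * r s ^ 2 * b s ^ 2)) • e s + r s • v s⟫ +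
    2 * V' s
  have hW : ∀ s ≥ (0 : ℝ), HasDerivWithinAt W (W' s) (Ici 0) s := fun s hs => by
    simpa [W, W', Pi.add_def] using (he s hs).norm_sq.add ((hz s hs).const_mul 2)
  have hdissipation : ∀ s ≥ (0 : ℝ), W' s ≤ -ζ * W s + 2 * ω := fun s hs => by
    have hdamping := two_mul_inner_damped_le T₁ (r s) hT₂ (e s) (hv s hs)
    have hrate_e := mul_le_mul_of_nonneg_right hζT₁ (sq_nonneg ‖e s‖)
    have hrate_z := mul_le_mul_of_nonneg_right hζκ (sq_nonneg ‖z s‖)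
    simp only [W, W']
    linarith [hV' s hs]
  have hdecay : W t ≤ (W 0 - 2 * ω / ζ) * Real.exp (-ζ * (t - 0)) + 2 * ω / ζ :=
    le_exp_of_deriv_right_le hζ₀ (fun s hs => (hW s hs).continuousWithinAt)
      (fun s hs => (hW s hs).mono (Ici_subset_Ici.2 hs)) hdissipation ht
  rw [sub_zero] at hdecay
  exact Real.le_sqrt_of_sq_le ((le_add_of_nonneg_right (sq_nonneg _)).trans hdecay)

/-- Lemma 1 of the paper, error-dynamics form: bound on the filtering
error of the modified low-pass filter (29). -/
theorem stmt3 (n : ℕ) (κ ω T₁ T₂ : ℝ)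
    (hκ : 0 < κ) (hω : 0 < ω) (hT₁ : 0 < T₁) (hT₂ : 0 < T₂)
    (hT₂κ : T₂ > 1 / (4 * κ))
    (ζ : ℝ) (hζ : ζ = min (2 * T₁) (2 * κ - 1 / (2 * T₂)))
    (z ef : ℝ → EuclideanSpace ℝ (Fin n))
    (hef0 : ef 0 = 0)
    (r : ℝ → ℝ) (hr : ContinuousOn r (Set.Ici (0 : ℝ)))
    (B : ℝ → Matrix (Fin n) (Fin n) ℝ) (hB : ContinuousOn B (Set.Ici (0 : ℝ)))
    -- (i) filtering-error dynamics:
    (hef : ∀ t ≥ (0 : ℝ), HasDerivAt ef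
      ((-(T₁ + T₂ * (r t) ^ 2 * (frobNorm (B t)) ^ 2)) • ef t
        + r t • matVec (B t) (z t)) t)
    -- (ii) Lyapunov decay of the scaled estimation error:
    (V' : ℝ → ℝ)
    (hzdiff : ∀ t ≥ (0 : ℝ), HasDerivAt (fun s => (1 / 2) * ‖z s‖ ^ 2) (V' t) t)
    (hV' : ∀ t ≥ (0 : ℝ), V' t ≤ -κ * ‖z t‖ ^ 2 + ω) :
    ∀ t ≥ (0 : ℝ),
      ‖ef t‖ ≤ Real.sqrt ((‖z 0‖ ^ 2 - 2 * ω / ζ) * Real.exp (-ζ * t) + 2 * ω / ζ) := by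
  have hζ₀ : ζ ≠ 0 := hζ ▸ (lt_min (by positivity) (two_mul_sub_one_div_pos hκ hT₂κ)).ne'
  simpa [hef0] using stmt3_general hT₂ hζ₀ (hζ ▸ min_le_left _ _) (hζ ▸ min_le_right _ _)
    (fun t ht => (hef t ht).hasDerivWithinAt) (fun t _ => norm_matVec_le (B t) (z t))
    (fun t ht => (hzdiff t ht).hasDerivWithinAt) hV'
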